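/- Let R0 > 0, T > 0, L0 > 0, δ > 0 and let f : ℝ × [R0,∞) → ℝ be continuous and T-periodic in its first variable, satisfying: there exist constants μ̌ ≤ μ̂ and a nonnegative integer N with (Nπ/T)² < μ̌, μ̂ < ((N+1)π/T)², and μ̌ ≤ liminf_{ρ→+∞} f(t,ρ)/ρ ≤ limsup_{ρ→+∞} f(t,ρ)/ρ ≤ μ̂ uniformly in t. Then there exist χ̄ > 0 and C > 0 (independent of n and L) such that every T-periodic solution x of x'' + g_n(L,t,x) = 0 with L ∈ [0,L0] whose orbit satisfies x(t)² + x'(t)² > χ̄² at all times where x(t) ≥ 0 satisfies (1/C)·‖x‖_∞ ≤ ‖x'‖_∞ ≤ C·‖x‖_∞ and x(t) > −‖x'‖_∞/√n ≥ −C·‖x‖_∞/√n for every t. -/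

import Mathlib

open Real Filter Set

/-- `g(L,t,r) = −L²/(r+R0)³ + f(t, r+R0)`. -/
noncomputable def gFun (R0 : ℝ) (f : ℝ → ℝ → ℝ) (L t r : ℝ) : ℝ :=
  -(L ^ 2) / (r + R0) ^ 3 + f t (r + R0)

/-- The approximating nonlinearity `g_n`. -/
noncomputable def gApprox (R0 δ : ℝ) (f : ℝ → ℝ → ℝ) (n : ℕ) (L t x : ℝ) : ℝ :=
  if 1 / (n : ℝ) ≤ x then gFun R0 f L t x
  else if 0 < x then (n : ℝ) * x * (gFun R0 f L t x + δ) - δ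
  else (n : ℝ) * x - δ

/-- Sup norm over `[0,T]`. -/
noncomputable def supNorm (T : ℝ) (x : ℝ → ℝ) : ℝ :=
  sSup ((fun t => |x t|) '' Icc (0 : ℝ) T)

lemma aux_min_sq (a : ℝ) : HasDerivAt (fun y : ℝ => (min y 0) ^ 2) (2 * min a 0) a := by
  rcases lt_trichotomy a 0 with h | h | h
  · have h1 : HasDerivAt (fun y : ℝ => y ^ 2) (2 * a) a := by
      simpa using hasDerivAt_pow 2 a
    rw [min_eq_left h.le]
    refine h1.congr_of_eventuallyEq ?_
    filter_upwards [Iio_mem_nhds h] with y hy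
    rw [min_eq_left (le_of_lt hy)]
  · subst h
    have h1 : HasDerivAt (fun y : ℝ => y ^ 2) 0 0 := by
      simpa using hasDerivAt_pow 2 (0 : ℝ)
    rw [hasDerivAt_iff_isLittleO] at h1 ⊢
    refine Asymptotics.IsBigO.trans_isLittleO ?_ h1
    refine Asymptotics.IsBigO.of_bound 1 (Eventually.of_forall fun y => ?_)
    simp only [min_self, mul_zero, smul_zero, sub_zero, one_mul]
    rcases le_total y 0 with h | h
    · rw [min_eq_left h]
    · rw [min_eq_right h]; norm_num; exact sq_nonneg y
  · rw [min_eq_right h.le, mul_zero]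
    refine (hasDerivAt_const a (0 : ℝ)).congr_of_eventuallyEq ?_
    filter_upwards [Ioi_mem_nhds h] with y hy
    rw [min_eq_right (le_of_lt hy)]; norm_num

lemma aux_max (T : ℝ) (hT : 0 < T) (x x' : ℝ → ℝ)
    (hx : ∀ t ∈ Icc (0 : ℝ) T, HasDerivWithinAt x (x' t) (Icc (0 : ℝ) T) t)
    (h0 : x 0 = x T) (h0' : x' 0 = x' T) (t : ℝ) (ht : t ∈ Icc (0 : ℝ) T)
    (hmax : ∀ s ∈ Icc (0 : ℝ) T, x s ≤ x t) : x' t = 0 := by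
  have key : (∀ s ∈ Icc (0 : ℝ) T, x s ≤ x 0) → x' 0 = 0 := by
    intro hm
    have m0 : (0 : ℝ) ∈ Icc (0 : ℝ) T := ⟨le_rfl, hT.le⟩
    have mT : T ∈ Icc (0 : ℝ) T := ⟨hT.le, le_rfl⟩
    have l0 : IsLocalMaxOn x (Icc (0 : ℝ) T) 0 := IsMaxOn.localize (fun s hs => hm s hs)
    have lT : IsLocalMaxOn x (Icc (0 : ℝ) T) T :=
      IsMaxOn.localize (fun s hs => (hm s hs).trans h0.le)
    have a := l0.hasFDerivWithinAt_nonpos (hx 0 m0).hasFDerivWithinAt (y := T - 0)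
      (sub_mem_posTangentConeAt_of_segment_subset
        ((convex_Icc 0 T).segment_subset m0 mT))
    have b := lT.hasFDerivWithinAt_nonpos (hx T mT).hasFDerivWithinAt (y := 0 - T)
      (sub_mem_posTangentConeAt_of_segment_subset
        ((convex_Icc 0 T).segment_subset mT m0))
    simp at a b
    rw [← h0'] at b
    nlinarith
  rcases eq_or_lt_of_le ht.1 with h | h
  · subst h; exact key hmax
  rcases eq_or_lt_of_le ht.2 with h2 | h2
  · subst h2; rw [← h0']; exact key (by rw [h0]; exact hmax)
  · have hn : Icc (0 : ℝ) T ∈ nhds t := Icc_mem_nhds h h2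
    have hl : IsLocalMax x t := by
      filter_upwards [hn] with s hs using hmax s hs
    exact hl.hasDerivAt_eq_zero ((hx t ht).hasDerivAt hn)

lemma aux_gron (a b K : ℝ) (V V' : ℝ → ℝ)
    (hV : ∀ t ∈ Icc a b, HasDerivWithinAt V (V' t) (Icc a b) t)
    (hb : ∀ t ∈ Icc a b, |V' t| ≤ K * V t) :
    ∀ s ∈ Icc a b, ∀ t ∈ Icc a b, s ≤ t →
      V t ≤ exp (K * (t - s)) * V s ∧ V s ≤ exp (K * (t - s)) * V t := by
  have hd : ∀ c : ℝ, ∀ t ∈ Icc a b, HasDerivWithinAt (fun t => exp (c * t) * V t)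
      (exp (c * t) * (c * V t + V' t)) (Icc a b) t := by
    intro c t ht
    have h1 : HasDerivAt (fun t => exp (c * t)) (exp (c * t) * c) t := by
      simpa using ((hasDerivAt_id t).const_mul c).exp
    refine (h1.hasDerivWithinAt.mul (hV t ht)).congr_deriv ?_
    ring
  have hc : ∀ c : ℝ, ContinuousOn (fun t => exp (c * t) * V t) (Icc a b) :=
    fun c t ht => (hd c t ht).continuousWithinAt
  have hdi : ∀ c : ℝ, ∀ t ∈ interior (Icc a b), HasDerivWithinAt (fun t => exp (c * t) * V t)
      (exp (c * t) * (c * V t + V' t)) (interior (Icc a b)) t :=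
    fun c t ht => (hd c t (interior_subset ht)).mono interior_subset
  have hmono : MonotoneOn (fun t => exp (K * t) * V t) (Icc a b) := by
    refine monotoneOn_of_hasDerivWithinAt_nonneg (convex_Icc a b) (hc K) (hdi K) ?_
    intro t ht
    have := neg_le_of_abs_le (hb t (interior_subset ht))
    have := exp_pos (K * t)
    exact mul_nonneg this.le (by linarith)
  have hanti : AntitoneOn (fun t => exp (-K * t) * V t) (Icc a b) := by
    refine antitoneOn_of_hasDerivWithinAt_nonpos (convex_Icc a b) (hc (-K)) (hdi (-K)) ?_
    intro t ht
    have := le_of_abs_le (hb t (interior_subset ht))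
    have := exp_pos (-K * t)
    exact mul_nonpos_of_nonneg_of_nonpos this.le (by linarith)
  intro s hs t ht hst
  have h1 := hmono hs ht hst
  have h2 := hanti hs ht hst
  simp only at h1 h2
  constructor
  · have := mul_le_mul_of_nonneg_left h2 (exp_pos (K * t)).le
    rw [← mul_assoc, ← mul_assoc, ← exp_add, ← exp_add] at this
    ring_nf at this ⊢
    simpa using this
  · have := mul_le_mul_of_nonneg_left h1 (exp_pos (-K * s)).le
    rw [← mul_assoc, ← mul_assoc, ← exp_add, ← exp_add] at this
    ring_nf at this ⊢
    simpa using this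

lemma aux_bound (R0 T L0 : ℝ) (hR0 : 0 < R0) (f : ℝ → ℝ → ℝ)
    (hf_cont : ContinuousOn (fun q : ℝ × ℝ => f q.1 q.2) (univ ×ˢ Ici R0))
    (μlo μhi : ℝ)
    (hlo : ∀ ε > (0 : ℝ), ∃ M : ℝ, R0 ≤ M ∧ ∀ t ρ : ℝ, M ≤ ρ → μlo - ε < f t ρ / ρ)
    (hhi : ∀ ε > (0 : ℝ), ∃ M : ℝ, R0 ≤ M ∧ ∀ t ρ : ℝ, M ≤ ρ → f t ρ / ρ < μhi + ε) :
    ∃ A : ℝ, 0 ≤ A ∧ ∀ L ∈ Icc (0 : ℝ) L0, ∀ t ∈ Icc (0 : ℝ) T, ∀ r : ℝ, 0 ≤ r →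
      |gFun R0 f L t r| ≤ A * (1 + r) := by
  obtain ⟨M1, hM1, h1⟩ := hlo 1 one_pos
  obtain ⟨M2, hM2, h2⟩ := hhi 1 one_pos
  set M := max M1 M2
  have hcomp : IsCompact (Icc (0 : ℝ) T ×ˢ Icc R0 M) := isCompact_Icc.prod isCompact_Icc
  obtain ⟨B2, hB2⟩ := hcomp.exists_bound_of_continuousOn
    (hf_cont.mono (prod_mono (subset_univ _) Icc_subset_Ici_self))
  set B := |μlo| + |μhi| + 1 with hB
  have hB0 : 0 ≤ B := by positivity
  have hq : 0 ≤ L0 ^ 2 / R0 ^ 3 := by positivity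
  refine ⟨L0 ^ 2 / R0 ^ 3 + |B2| + B * (1 + R0), by positivity, ?_⟩
  intro L hL t ht r hr
  have hL2 : |-(L ^ 2) / (r + R0) ^ 3| ≤ L0 ^ 2 / R0 ^ 3 := by
    rw [abs_div, abs_neg, abs_of_nonneg (sq_nonneg L), abs_of_pos (by positivity)]
    have := hL.1
    have := hL.2
    gcongr
    linarith
  have hfb : |f t (r + R0)| ≤ |B2| + B * (r + R0) := by
    have hp : 0 < r + R0 := by linarith
    rcases le_total (r + R0) M with h | h
    · have := hB2 (t, r + R0) ⟨ht, by simpa using hr, h⟩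
      simp only [Real.norm_eq_abs] at this
      have := le_abs_self B2
      have : 0 ≤ B * (r + R0) := by positivity
      linarith
    · have a := h1 t (r + R0) ((le_max_left _ _).trans h)
      have b := h2 t (r + R0) ((le_max_right _ _).trans h)
      have c : |f t (r + R0) / (r + R0)| ≤ B := by
        rw [abs_le]
        have := neg_abs_le μlo
        have := le_abs_self μhi
        have := abs_nonneg μlo
        have := abs_nonneg μhi
        constructor <;> linarith
      rw [abs_div, abs_of_pos hp, div_le_iff₀ hp] at c
      have := abs_nonneg B2
      linarith
  unfold gFun
  refine (abs_add_le _ _).trans ?_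
  have := mul_nonneg hq hr
  have := mul_nonneg (abs_nonneg B2) hr
  have := mul_nonneg (mul_nonneg hB0 hR0.le) hr
  nlinarith

set_option maxHeartbeats 4000000 in
theorem statement11
    (R0 T L0 δ : ℝ) (hR0 : 0 < R0) (hT : 0 < T) (hL0 : 0 < L0) (hδ : 0 < δ)
    (f : ℝ → ℝ → ℝ)
    (hf_cont : ContinuousOn (fun q : ℝ × ℝ => f q.1 q.2) (univ ×ˢ Ici R0))
    (hf_per : ∀ t ρ, f (t + T) ρ = f t ρ)
    (μlo μhi : ℝ) (N : ℕ) (hμ : μlo ≤ μhi)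
    (h1 : ((N : ℝ) * π / T) ^ 2 < μlo)
    (h2 : μhi < (((N : ℝ) + 1) * π / T) ^ 2)
    (hlo : ∀ ε > (0 : ℝ), ∃ M : ℝ, R0 ≤ M ∧ ∀ t ρ : ℝ, M ≤ ρ → μlo - ε < f t ρ / ρ)
    (hhi : ∀ ε > (0 : ℝ), ∃ M : ℝ, R0 ≤ M ∧ ∀ t ρ : ℝ, M ≤ ρ → f t ρ / ρ < μhi + ε) :
    ∃ χbar C : ℝ, 0 < χbar ∧ 0 < C ∧
      ∀ n : ℕ, 0 < n → ∀ L ∈ Icc (0 : ℝ) L0, ∀ x x' : ℝ → ℝ,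
        (∀ t ∈ Icc (0 : ℝ) T,
          HasDerivWithinAt x (x' t) (Icc (0 : ℝ) T) t ∧
          HasDerivWithinAt x' (-(gApprox R0 δ f n L t (x t))) (Icc (0 : ℝ) T) t) →
        x 0 = x T → x' 0 = x' T →
        (∀ t ∈ Icc (0 : ℝ) T, 0 ≤ x t → χbar ^ 2 < (x t) ^ 2 + (x' t) ^ 2) →
        (1 / C) * supNorm T x ≤ supNorm T x' ∧
        supNorm T x' ≤ C * supNorm T x ∧
        (∀ t ∈ Icc (0 : ℝ) T,
          -(supNorm T x') / Real.sqrt n < x t ∧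
          -(C * supNorm T x) / Real.sqrt n ≤ -(supNorm T x') / Real.sqrt n) := by
  
  have hμpos : 0 < μlo := lt_of_le_of_lt (sq_nonneg _) h1
  obtain ⟨A, hA0, hA⟩ := aux_bound R0 T L0 hR0 f hf_cont μlo μhi hlo hhi
  obtain ⟨M, hM, hMf⟩ := hlo (μlo / 2) (by linarith)
  set q := L0 ^ 2 / R0 ^ 3 with hq
  have hq0 : 0 < q := by positivity
  set χ := 1 + 4 * δ + M + 2 * q / μlo with hχ
  have hqm : 0 < 2 * q / μlo := by positivity
  have hM0 : 0 < M := by linarith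
  have hχ1 : 1 ≤ χ := by linarith
  have hχδ : 4 * δ ≤ χ := by linarith
  set K := 4 * (1 + 2 * A + 2 * δ) with hK
  have hK0 : 0 ≤ K := by positivity
  set Q := exp (K * T) with hQ
  have hQ0 : 0 < Q := exp_pos _
  refine ⟨χ, √(2 * Q), by linarith, by positivity, ?_⟩
  intro n hn L hL x x' hsol hx0 hx0' hbig
  have hn1 : (1 : ℝ) ≤ n := by exact_mod_cast hn
  have hnp : (0 : ℝ) < n := by linarith
  have m0 : (0 : ℝ) ∈ Icc (0 : ℝ) T := ⟨le_rfl, hT.le⟩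
  have hx := fun t ht => (hsol t ht).1
  have hy := fun t ht => (hsol t ht).2
  have hxc : ContinuousOn x (Icc 0 T) := fun t ht => (hx t ht).continuousWithinAt
  have hyc : ContinuousOn x' (Icc 0 T) := fun t ht => (hy t ht).continuousWithinAt
  have rolle : ∃ c ∈ Icc (0 : ℝ) T, gApprox R0 δ f n L c (x c) = 0 := by
    obtain ⟨c, hc, h⟩ := exists_hasDerivAt_eq_zero (f := x')
      (f' := fun t => -(gApprox R0 δ f n L t (x t))) hT hyc hx0'
      (fun t ht => (hy t (Ioo_subset_Icc_self ht)).hasDerivAt (Icc_mem_nhds ht.1 ht.2))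
    exact ⟨c, Ioo_subset_Icc_self hc, by simpa using h⟩
  obtain ⟨c, hc, hgc⟩ := rolle
  obtain ⟨t1, ht1, hmax⟩ := isCompact_Icc.exists_isMaxOn ⟨0, m0⟩ hxc
  obtain ⟨t0, ht0, hmin⟩ := isCompact_Icc.exists_isMinOn ⟨0, m0⟩ hxc
  have hy1 : x' t1 = 0 := aux_max T hT x x' hx hx0 hx0' t1 ht1 hmax
  have hy0 : x' t0 = 0 := by
    have := aux_max T hT (fun t => -x t) (fun t => -x' t) (fun t ht => (hx t ht).neg)
      (by simp [hx0]) (by simp [hx0']) t0 ht0 (fun s hs => neg_le_neg (hmin hs))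
    simpa using this
  have glow : ∀ t u, u ≤ 0 → gApprox R0 δ f n L t u = n * u - δ := by
    intro t u hu
    unfold gApprox
    have : 0 < 1 / (n : ℝ) := by positivity
    rw [if_neg (by linarith), if_neg (by linarith)]
  have hx1 : 0 < x t1 := by
    by_contra hcon
    push Not at hcon
    have hxc0 : x c ≤ 0 := (hmax hc).trans hcon
    rw [glow _ _ hxc0] at hgc
    nlinarith
  have hxneg : x t0 < 0 := by
    by_contra hcon
    push Not at hcon
    have h3 := hbig t0 ht0 hcon
    rw [hy0] at h3
    have h4 : χ < x t0 := by
      have : χ ^ 2 < x t0 ^ 2 := by linarith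
      exact lt_of_pow_lt_pow_left₀ 2 hcon this
    have h5 : χ < x c := h4.trans_le (hmin hc)
    have h6 : 1 / (n : ℝ) ≤ x c := by
      rw [div_le_iff₀ hnp]; nlinarith
    unfold gApprox at hgc
    rw [if_pos h6] at hgc
    unfold gFun at hgc
    have hp : 0 < x c + R0 := by linarith
    have h7 := hMf c (x c + R0) (by linarith)
    rw [lt_div_iff₀ hp] at h7
    have hL2 : L ^ 2 / (x c + R0) ^ 3 ≤ q := by
      have := hL.1
      have := hL.2
      rw [hq]
      gcongr
      linarith
    rw [neg_div] at hgc
    have h8 : 2 * q / μlo < x c := by linarith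
    rw [div_lt_iff₀ hμpos] at h8
    nlinarith [mul_pos hμpos hR0]
  obtain ⟨t2, ht2, hx2⟩ : ∃ t ∈ Icc (0 : ℝ) T, x t = 0 :=
    isPreconnected_Icc.intermediate_value ht0 ht1 hxc ⟨hxneg.le, hx1.le⟩
  set V : ℝ → ℝ := fun t => x' t ^ 2 + x t ^ 2 - 2 * δ * x t + (n - 1) * (min (x t) 0) ^ 2 with hV
  set V' : ℝ → ℝ := fun t => 2 * x' t * (-(gApprox R0 δ f n L t (x t)) + x t - δ
      + (n - 1) * min (x t) 0) with hV'
  have hVd : ∀ t ∈ Icc (0 : ℝ) T, HasDerivWithinAt V (V' t) (Icc 0 T) t := by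
    intro t ht
    have d1 := (hy t ht).pow 2
    have d2 := (hx t ht).pow 2
    have d3 := (hx t ht).const_mul (2 * δ)
    have d4 := ((aux_min_sq (x t)).comp_hasDerivWithinAt t (hx t ht)).const_mul ((n : ℝ) - 1)
    refine (((d1.add d2).sub d3).add d4).congr_deriv ?_
    simp only [hV']
    push_cast
    ring
  have hVlow : ∀ t, x t ≤ 0 → V t = x' t ^ 2 + n * x t ^ 2 - 2 * δ * x t := by
    intro t ht
    simp only [hV, min_eq_left ht]; ring
  have hVhigh : ∀ t, 0 ≤ x t → V t = x' t ^ 2 + x t ^ 2 - 2 * δ * x t := by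
    intro t ht
    simp only [hV, min_eq_right ht]; ring
  have hV'low : ∀ t, x t ≤ 0 → V' t = 0 := by
    intro t ht
    simp only [hV', min_eq_left ht, glow t _ ht]; ring
  have hρ : ∀ t ∈ Icc (0 : ℝ) T, 0 ≤ x t →
      x' t ^ 2 + x t ^ 2 ≤ 2 * V t ∧ 1 ≤ x' t ^ 2 + x t ^ 2 := by
    intro t ht h
    rw [hVhigh t h]
    have hb := hbig t ht h
    constructor
    · have k1 : (4 * δ) ^ 2 ≤ χ ^ 2 := pow_le_pow_left₀ (by linarith) hχδ 2
      have k2 := sq_nonneg (x t - 4 * δ)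
      have k3 := sq_nonneg (x' t)
      linarith
    · have k1 : (1 : ℝ) ^ 2 ≤ χ ^ 2 := pow_le_pow_left₀ zero_le_one hχ1 2
      linarith
  have hgb : ∀ t ∈ Icc (0 : ℝ) T, 0 ≤ x t →
      |gApprox R0 δ f n L t (x t)| ≤ A * (1 + x t) + δ := by
    intro t ht h
    have hg := hA L hL t ht (x t) h
    unfold gApprox
    split_ifs with a b
    · linarith
    · push Not at a
      rw [lt_div_iff₀ hnp] at a
      set g := gFun R0 f L t (x t)
      have hnx : 0 ≤ n * x t := by positivity
      have e : n * x t * (g + δ) - δ = n * x t * g + (-(1 - n * x t) * δ) := by ring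
      rw [e]
      refine (abs_add_le _ _).trans ?_
      rw [abs_mul (n * x t), abs_mul (-(1 - n * x t)), abs_neg, abs_of_nonneg hnx,
        abs_of_nonneg (by linarith : 0 ≤ 1 - n * x t),
        abs_of_pos hδ]
      nlinarith [abs_nonneg g]
    · have : x t = 0 := le_antisymm (not_lt.mp b) h
      rw [this]
      simp [abs_of_pos hδ, hA0]
  have hVb : ∀ t ∈ Icc (0 : ℝ) T, |V' t| ≤ K * V t := by
    intro t ht
    rcases le_total (x t) 0 with h | h
    · rw [hV'low t h, hVlow t h, abs_zero]
      have : 0 ≤ δ * (-x t) := mul_nonneg hδ.le (by linarith)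
      have : 0 ≤ x' t ^ 2 + n * x t ^ 2 := by positivity
      exact mul_nonneg hK0 (by linarith)
    · obtain ⟨r1, r2⟩ := hρ t ht h
      have hg := hgb t ht h
      have e : V' t = 2 * x' t * (-(gApprox R0 δ f n L t (x t)) + x t - δ) := by
        simp only [hV', min_eq_right h]; ring
      have i1 : |-(gApprox R0 δ f n L t (x t)) + x t - δ| ≤ (1 + A) * x t + (A + 2 * δ) := by
        rw [abs_le] at hg ⊢
        constructor
        · nlinarith [mul_nonneg hA0 h]
        · nlinarith [mul_nonneg hA0 h]
      have i2 : |x' t| * x t ≤ x' t ^ 2 + x t ^ 2 := by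
        nlinarith [sq_nonneg (|x' t| - x t), sq_abs (x' t), abs_nonneg (x' t)]
      have i3 : |x' t| ≤ x' t ^ 2 + x t ^ 2 := by
        have s := sq_abs (x' t)
        rcases le_total (|x' t|) 1 with j | j
        · linarith
        · nlinarith [sq_nonneg (x t)]
      rw [e, abs_mul, abs_mul, abs_two]
      calc 2 * |x' t| * |-(gApprox R0 δ f n L t (x t)) + x t - δ|
          ≤ 2 * |x' t| * ((1 + A) * x t + (A + 2 * δ)) := by gcongr
        _ = 2 * ((1 + A) * (|x' t| * x t) + (A + 2 * δ) * |x' t|) := by ring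
        _ ≤ 2 * ((1 + A) * (x' t ^ 2 + x t ^ 2) + (A + 2 * δ) * (x' t ^ 2 + x t ^ 2)) := by gcongr
        _ = 2 * (1 + 2 * A + 2 * δ) * (x' t ^ 2 + x t ^ 2) := by ring
        _ ≤ 2 * (1 + 2 * A + 2 * δ) * (2 * V t) := by gcongr
        _ = K * V t := by rw [hK]; ring
  have hVpos : ∀ t ∈ Icc (0 : ℝ) T, x' t ^ 2 ≤ 2 * V t ∧ x t ^ 2 ≤ 2 * V t ∧ 0 ≤ V t := by
    intro t ht
    rcases le_total (x t) 0 with h | h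
    · rw [hVlow t h]
      have a1 : 0 ≤ δ * (-x t) := mul_nonneg hδ.le (by linarith)
      have a2 := sq_nonneg (x t)
      have a3 := sq_nonneg (x' t)
      have a4 : x t ^ 2 ≤ n * x t ^ 2 := by nlinarith
      refine ⟨by linarith, by linarith, by linarith⟩
    · have := (hρ t ht h).1
      have a2 := sq_nonneg (x t)
      have a3 := sq_nonneg (x' t)
      refine ⟨by linarith, by linarith, by linarith⟩
  have hcmp : ∀ s ∈ Icc (0 : ℝ) T, ∀ t ∈ Icc (0 : ℝ) T, V t ≤ Q * V s := by
    intro s hs t ht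
    rcases le_total s t with h | h
    · refine ((aux_gron 0 T K V V' hVd hVb s hs t ht h).1).trans ?_
      refine mul_le_mul_of_nonneg_right (exp_le_exp.mpr ?_) (hVpos s hs).2.2
      exact mul_le_mul_of_nonneg_left (by linarith [hs.1, ht.2]) hK0
    · refine ((aux_gron 0 T K V V' hVd hVb t ht s hs h).2).trans ?_
      refine mul_le_mul_of_nonneg_right (exp_le_exp.mpr ?_) (hVpos s hs).2.2
      exact mul_le_mul_of_nonneg_left (by linarith [hs.2, ht.1]) hK0
  have bdd : ∀ u : ℝ → ℝ, ContinuousOn u (Icc 0 T) → ∀ t ∈ Icc (0 : ℝ) T, |u t| ≤ supNorm T u := by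
    intro u hu t ht
    exact le_csSup (isCompact_Icc.image_of_continuousOn hu.abs).bddAbove ⟨t, ht, rfl⟩
  have sle : ∀ u : ℝ → ℝ, ∀ b : ℝ, (∀ t ∈ Icc (0 : ℝ) T, |u t| ≤ b) → supNorm T u ≤ b := by
    intro u b hu
    refine csSup_le ⟨_, 0, m0, rfl⟩ ?_
    rintro _ ⟨t, ht, rfl⟩
    exact hu t ht
  set X := supNorm T x with hX
  set Y := supNorm T x' with hY
  have bx := bdd x hxc
  have bY := bdd x' hyc
  have hX0 : 0 < X := by
    have := bx t1 ht1
    rw [abs_of_pos hx1] at this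
    linarith
  have hY0 : 0 ≤ Y := (abs_nonneg _).trans (bY 0 m0)
  have hC0 : 0 < √(2 * Q) := by positivity
  have hCs : √(2 * Q) ^ 2 = 2 * Q := Real.sq_sqrt (by positivity)
  have hYX : Y ≤ √(2 * Q) * X := by
    refine sle x' _ fun t ht => abs_le_of_sq_le_sq ?_ (by positivity)
    have v1 : V t1 ≤ X ^ 2 := by
      rw [hVhigh t1 hx1.le, hy1]
      have := bx t1 ht1
      rw [abs_of_pos hx1] at this
      nlinarith [mul_pos hδ hx1]
    have := hcmp t1 ht1 t ht
    have := (hVpos t ht).1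
    rw [mul_pow, hCs]
    nlinarith
  have hsq : ∀ s ∈ Icc (0 : ℝ) T, x' s ^ 2 ≤ Y ^ 2 := by
    intro s hs
    exact sq_le_sq' (neg_le_of_abs_le (bY s hs)) (le_of_abs_le (bY s hs))
  have hXY : X ≤ √(2 * Q) * Y := by
    refine sle x _ fun t ht => abs_le_of_sq_le_sq ?_ (by positivity)
    have v2 : V t2 ≤ Y ^ 2 := by
      rw [hVhigh t2 hx2.ge, hx2]
      have := hsq t2 ht2
      linarith
    have := hcmp t2 ht2 t ht
    have := (hVpos t ht).2.1
    rw [mul_pow, hCs]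
    nlinarith
  have hYp : 0 < Y := by
    by_contra hcon
    have : Y = 0 := le_antisymm (not_lt.mp hcon) hY0
    rw [this] at hXY
    linarith
  have hsn : 0 < √(n : ℝ) := by positivity
  refine ⟨?_, hYX, ?_⟩
  · rw [one_div, inv_mul_le_iff₀ hC0]; exact hXY
  intro t ht
  refine ⟨?_, by gcongr⟩
  rcases lt_or_ge (x t) 0 with hneg | hnn
  swap
  · have : -Y / √(n : ℝ) < 0 := div_neg_of_neg_of_pos (by linarith) hsn
    linarith
  have hVt : V t ≤ Y ^ 2 := by
    have const : ∀ a b, a ∈ Icc (0 : ℝ) T → b ∈ Icc (0 : ℝ) T → a ≤ b →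
        (∀ s ∈ Icc a b, x s ≤ 0) → V a = V b := by
      intro a b ha hb hab h
      have hsub : Icc a b ⊆ Icc 0 T := Icc_subset_Icc ha.1 hb.2
      have := aux_gron a b 0 V V' (fun s hs => (hVd s (hsub hs)).mono hsub)
        (fun s hs => by rw [hV'low s (h s hs)]; simp) a ⟨le_rfl, hab⟩ b ⟨hab, le_rfl⟩ hab
      simp at this
      exact le_antisymm this.2 this.1
    have fin : ∀ s ∈ Icc (0 : ℝ) T, x s = 0 → V s ≤ Y ^ 2 := by
      intro s hs h
      rw [hVhigh s h.ge, h]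
      have := hsq s hs
      linarith
    have zeroc : ∀ a b, a ∈ Icc (0 : ℝ) T → b ∈ Icc (0 : ℝ) T →
        IsCompact (Icc a b ∩ {s | x s = 0}) := by
      intro a b ha hb
      have hsub : Icc a b ⊆ Icc 0 T := Icc_subset_Icc ha.1 hb.2
      exact isCompact_Icc.of_isClosed_subset
        ((hxc.mono hsub).preimage_isClosed_of_isClosed isClosed_Icc isClosed_singleton)
        inter_subset_left
    rcases le_total t2 t with h | h
    · obtain ⟨s, hs, hgr⟩ := (zeroc t2 t ht2 ht).exists_isGreatest ⟨t2, ⟨le_rfl, h⟩, hx2⟩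
      have hsI : s ∈ Icc (0 : ℝ) T := ⟨ht2.1.trans hs.1.1, hs.1.2.trans ht.2⟩
      rw [← const s t hsI ht hs.1.2 ?_]
      · exact fin s hsI hs.2
      intro r hr
      by_contra hcon
      push Not at hcon
      have hsub : Icc r t ⊆ Icc (0 : ℝ) T := Icc_subset_Icc (hsI.1.trans hr.1) ht.2
      obtain ⟨w, hw, hw0⟩ := isPreconnected_Icc.intermediate_value
        (right_mem_Icc.mpr hr.2) (left_mem_Icc.mpr hr.2) (hxc.mono hsub)
        (show (0 : ℝ) ∈ Icc (x t) (x r) from ⟨hneg.le, hcon.le⟩)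
      have := hgr ⟨⟨hs.1.1.trans (hr.1.trans hw.1), hw.2⟩, hw0⟩
      have : r = s := le_antisymm (hw.1.trans this) hr.1
      have hs2 : x s = 0 := hs.2
      rw [this] at hcon
      linarith
    · obtain ⟨s, hs, hgr⟩ := (zeroc t t2 ht ht2).exists_isLeast ⟨t2, ⟨h, le_rfl⟩, hx2⟩
      have hsI : s ∈ Icc (0 : ℝ) T := ⟨ht.1.trans hs.1.1, hs.1.2.trans ht2.2⟩
      rw [const t s ht hsI hs.1.1 ?_]
      · exact fin s hsI hs.2
      intro r hr
      by_contra hcon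
      push Not at hcon
      have hsub : Icc t r ⊆ Icc (0 : ℝ) T := Icc_subset_Icc ht.1 (hr.2.trans hsI.2)
      obtain ⟨w, hw, hw0⟩ := isPreconnected_Icc.intermediate_value
        (left_mem_Icc.mpr hr.1) (right_mem_Icc.mpr hr.1) (hxc.mono hsub)
        (show (0 : ℝ) ∈ Icc (x t) (x r) from ⟨hneg.le, hcon.le⟩)
      have := hgr ⟨⟨hw.1, hw.2.trans (hr.2.trans hs.1.2)⟩, hw0⟩
      have : r = s := le_antisymm hr.2 (this.trans hw.2)
      have hs2 : x s = 0 := hs.2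
      rw [this] at hcon
      linarith
  rw [hVlow t hneg.le] at hVt
  rw [div_lt_iff₀ hsn]
  have hk : (x t * √(n : ℝ)) ^ 2 < Y ^ 2 := by
    rw [mul_pow, Real.sq_sqrt hnp.le]
    have : 0 < δ * (-x t) := mul_pos hδ (by linarith)
    nlinarith [sq_nonneg (x' t)]
  exact (abs_lt_of_sq_lt_sq' hk hY0).1
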